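/- Let ν ∈ ℂ \ (−ℕ₀), μ ∈ (−1/2, ∞) \ {0}, x ∈ [−1, 1], and ρ ∈ ℝ with 0 < ρ < 1. Then 1/(1 + ρ² − 2ρx)^ν = (Γ(μ) e^{iπ(μ−ν+1/2)})/(√π Γ(ν) ρ^{μ+1/2} (1−ρ²)^{ν−μ−1/2}) · Σ_{n=0}^∞ (n + μ) Q_{n+μ−1/2}^{ν−μ−1/2}((1+ρ²)/(2ρ)) C_n^μ(x). -/

import Mathlib

open Complex

/-- Pochhammer symbol (rising factorial) `(a)_k = a (a+1) ⋯ (a+k-1)`. -/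
noncomputable def poch (a : ℂ) (k : ℕ) : ℂ := ∏ i ∈ Finset.range k, (a + (i : ℂ))

/-- Gauss hypergeometric function `₂F₁(a,b;c;w)` as a series. -/
noncomputable def hyp2F1 (a b c w : ℂ) : ℂ :=
  ∑' k : ℕ, poch a k * poch b k / (poch c k * (Nat.factorial k : ℂ)) * w ^ k

/-- Terminating generalized hypergeometric function `₃F₂(-m,a₂,a₃;b₁,b₂;1)`. -/
noncomputable def hyp3F2 (m : ℕ) (a2 a3 b1 b2 : ℂ) : ℂ :=
  ∑ j ∈ Finset.range (m + 1),
    poch (-(m : ℂ)) j * poch a2 j * poch a3 j /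
      (poch b1 j * poch b2 j * (Nat.factorial j : ℂ))

/-- Gegenbauer polynomial `C_n^μ(x)`. -/
noncomputable def gegenbauerC (n : ℕ) (μ : ℂ) (x : ℂ) : ℂ :=
  poch (2 * μ) n / (Nat.factorial n : ℂ) *
    ∑ j ∈ Finset.range (n + 1),
      poch (-(n : ℂ)) j * poch ((n : ℂ) + 2 * μ) j /
          (poch (μ + 1 / 2) j * (Nat.factorial j : ℂ)) * ((1 - x) / 2) ^ j

/-- Associated Legendre function of the second kind `Q_ν^μ(z)` (principal branches). -/
noncomputable def legendreQ (ν μ z : ℂ) : ℂ :=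
  (Real.sqrt Real.pi : ℂ) * Complex.exp (Real.pi * I * μ) * Complex.Gamma (ν + μ + 1) *
      (z ^ 2 - 1) ^ (μ / 2) /
      ((2 : ℂ) ^ (ν + 1) * Complex.Gamma (ν + 3 / 2) * z ^ (ν + μ + 1)) *
    hyp2F1 ((ν + μ + 2) / 2) ((ν + μ + 1) / 2) (ν + 3 / 2) (1 / z ^ 2)

/-- Legendre polynomial `P_n(x)`. -/
noncomputable def legendrePoly (n : ℕ) (x : ℂ) : ℂ :=
  ∑ j ∈ Finset.range (n + 1),
    poch (-(n : ℂ)) j * poch ((n : ℂ) + 1) j / (poch 1 j * (Nat.factorial j : ℂ)) *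
      ((1 - x) / 2) ^ j

/-- Chebyshev polynomial of the second kind `U_n(x)`. -/
noncomputable def chebyshevU (n : ℕ) (x : ℂ) : ℂ :=
  ((n : ℂ) + 1) *
    ∑ j ∈ Finset.range (n + 1),
      poch (-(n : ℂ)) j * poch ((n : ℂ) + 2) j / (poch (3 / 2) j * (Nat.factorial j : ℂ)) *
        ((1 - x) / 2) ^ j

/-!
Put `t = 2ρ / (1 + ρ²)`, so that `1 + ρ² - 2ρx = (1 + ρ²)(1 - xt)` and `1 / t = (1 + ρ²) / (2ρ)`.
Expand `(1 - xt) ^ (-ν)` by the binomial series and each power `x ^ m` in Gegenbauer polynomials.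
After collecting the terms with a fixed `C_n^μ(x)`, the remaining sum over `m = n + 2k` is a
`₂F₁(…; t²)`, which is the series defining `Q_{n+μ-1/2}^{ν-μ-1/2}(1 / t)`.

Rearranging the double sum needs `C_n^μ(x)` to grow subexponentially on `[-1, 1]`. With `x = cos θ`,
the three-term recurrence identifies `C_n^μ(x)` with the coefficient of `X ^ n` in
`(1 - e^{iθ} X) ^ (-μ) (1 - e^{-iθ} X) ^ (-μ)`, a product of series of radius of convergence `≥ 1`.
-/

open Filter Topology

section Pochhammer

theorem poch_zero (a : ℂ) : poch a 0 = 1 := Finset.prod_range_zero _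

theorem poch_succ (a : ℂ) (k : ℕ) : poch a (k + 1) = poch a k * (a + k) :=
  Finset.prod_range_succ _ _

theorem poch_eq_ascPochhammer_eval (a : ℂ) (k : ℕ) : poch a k = (ascPochhammer ℂ k).eval a := by
  induction k with
  | zero => simp [poch_zero]
  | succ k ih => rw [poch_succ, ih, ascPochhammer_succ_eval]

theorem poch_add (a : ℂ) (m k : ℕ) : poch a (m + k) = poch a m * poch (a + m) k := by
  simp only [poch, Finset.prod_range_add, Nat.cast_add, add_assoc]

theorem poch_succ_left (a : ℂ) (k : ℕ) : poch a (k + 1) = a * poch (a + 1) k := by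
  rw [add_comm, poch_add, poch_succ, poch_zero]
  simp

theorem poch_ne_zero {a : ℂ} (ha : ∀ m : ℕ, a ≠ -(m : ℂ)) (k : ℕ) : poch a k ≠ 0 :=
  Finset.prod_ne_zero_iff.mpr fun i _ h => ha i (eq_neg_of_add_eq_zero_left h)

theorem poch_neg_natCast_of_lt {n j : ℕ} (h : n < j) : poch (-(n : ℂ)) j = 0 := by
  rw [poch_eq_ascPochhammer_eval, ascPochhammer_eval_neg_coe_nat_of_lt h]

theorem poch_half_mul_poch_half (a : ℂ) (k : ℕ) :
    poch ((a + 1) / 2) k * poch (a / 2) k = poch a (2 * k) / 4 ^ k := by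
  induction k with
  | zero => simp [poch_zero]
  | succ k ih =>
    rw [mul_add_one, poch_succ, poch_succ, poch_succ a (2 * k + 1), poch_succ a (2 * k), pow_succ]
    push_cast
    linear_combination ((a + 1) / 2 + k) * (a / 2 + k) * ih

theorem poch_neg_div_factorial_eq_sub_mul (n j : ℕ) :
    poch (-(n : ℂ)) j / n.factorial =
      (n + 1 - j) * (poch (-((n + 1 : ℕ) : ℂ)) j / (n + 1).factorial) := by
  have hn : (n + 1 : ℂ) ≠ 0 := by exact_mod_cast n.succ_ne_zero
  have hf : (n.factorial : ℂ) ≠ 0 := by exact_mod_cast n.factorial_ne_zero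
  have hshift : -((n + 1 : ℕ) : ℂ) * poch (-(n : ℂ)) j =
      poch (-((n + 1 : ℕ) : ℂ)) j * (-((n + 1 : ℕ) : ℂ) + j) := by
    rw [← poch_succ, poch_succ_left]
    push_cast
    ring_nf
  rw [Nat.factorial_succ]
  push_cast at hshift ⊢
  field_simp
  linear_combination -hshift

theorem poch_neg_div_factorial_eq_neg (n j : ℕ) :
    poch (-(n : ℂ)) j / n.factorial =
      -(poch (-((n + 1 : ℕ) : ℂ)) (j + 1) / (n + 1).factorial) := by
  have hn : (n + 1 : ℂ) ≠ 0 := by exact_mod_cast n.succ_ne_zero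
  have hf : (n.factorial : ℂ) ≠ 0 := by exact_mod_cast n.factorial_ne_zero
  rw [poch_succ_left, Nat.factorial_succ,
    show -((n + 1 : ℕ) : ℂ) + 1 = -(n : ℂ) by push_cast; ring]
  push_cast
  field_simp

theorem Gamma_natCast_add {a : ℂ} (ha : ∀ m : ℕ, a ≠ -(m : ℂ)) (n : ℕ) :
    Complex.Gamma (n + a) = Complex.Gamma a * poch a n := by
  rw [poch_eq_ascPochhammer_eval, ← Complex.Gamma_add_nat_div_Gamma_eq a ha,
    mul_div_cancel₀ _ (Complex.Gamma_ne_zero ha), add_comm]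

theorem hasSum_poch_div_factorial_mul_pow (ν : ℂ) {y : ℂ} (hy : ‖y‖ < 1) :
    HasSum (fun m : ℕ => poch ν m / m.factorial * y ^ m) (1 / (1 - y) ^ ν) := by
  have hcoeff (m : ℕ) : poch ν m / m.factorial = Ring.choose (ν + m - 1) m := by
    have hf : (m.factorial : ℂ) ≠ 0 := by exact_mod_cast m.factorial_ne_zero
    rw [poch_eq_ascPochhammer_eval, ← Polynomial.ascPochhammer_smeval_eq_eval,
      ← Ring.factorial_nsmul_multichoose_eq_ascPochhammer, nsmul_eq_mul, mul_div_cancel_left₀ _ hf,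
      Ring.multichoose_eq]
  simp only [hcoeff]
  simpa [mul_comm] using (Complex.one_div_one_sub_cpow_hasFPowerSeriesOnBall_zero ν).hasSum (y := y)
    (by simpa [enorm_eq_nnnorm, ← NNReal.coe_lt_coe] using hy)

end Pochhammer

section Recurrence

/-- The coefficient of `((1 - x) / 2) ^ j` in the Gegenbauer polynomial `C_n^μ(x)`, with
`(2μ)_n (n + 2μ)_j` merged into `(2μ)_{n+j}`. -/
noncomputable def gegenbauerCoeff (μ : ℂ) (n j : ℕ) : ℂ :=
  poch (-(n : ℂ)) j / n.factorial * poch (2 * μ) (n + j) / (poch (μ + 1 / 2) j * j.factorial)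

theorem gegenbauerC_eq_sum_gegenbauerCoeff (μ x : ℂ) {n N : ℕ} (h : n < N) :
    gegenbauerC n μ x = ∑ j ∈ Finset.range N, gegenbauerCoeff μ n j * ((1 - x) / 2) ^ j := by
  rw [← Finset.sum_subset (Finset.range_mono h), gegenbauerC, Finset.mul_sum]
  · refine Finset.sum_congr rfl fun j _ => ?_
    rw [gegenbauerCoeff, poch_add, add_comm (n : ℂ) (2 * μ)]
    ring
  · intro j _ hj
    simp [gegenbauerCoeff, poch_neg_natCast_of_lt (not_lt.mp (Finset.mem_range.not.mp hj))]

theorem gegenbauerCoeff_zero_recurrence (μ : ℂ) (n : ℕ) :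
    ((n : ℂ) + 2) * gegenbauerCoeff μ (n + 2) 0 =
      2 * (n + 1 + μ) * gegenbauerCoeff μ (n + 1) 0 - (n + 2 * μ) * gegenbauerCoeff μ n 0 := by
  simp only [gegenbauerCoeff, add_zero]
  rw [poch_neg_div_factorial_eq_sub_mul n, poch_neg_div_factorial_eq_sub_mul (n + 1),
    poch_succ _ (n + 1), poch_succ _ n]
  simp only [poch_zero]
  push_cast
  ring

theorem gegenbauerCoeff_succ_recurrence {μ : ℂ} (hμ : ∀ m : ℕ, μ + 1 / 2 ≠ -(m : ℂ)) (n j : ℕ) :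
    ((n : ℂ) + 2) * gegenbauerCoeff μ (n + 2) (j + 1) =
      2 * (n + 1 + μ) * (gegenbauerCoeff μ (n + 1) (j + 1) - 2 * gegenbauerCoeff μ (n + 1) j) -
        (n + 2 * μ) * gegenbauerCoeff μ n (j + 1) := by
  set u : ℂ := poch (-((n + 2 : ℕ) : ℂ)) (j + 1) / (n + 2).factorial with hu
  set c : ℂ := u * poch (2 * μ) (n + j + 1) / (poch (μ + 1 / 2) (j + 1) * (j + 1).factorial) with hc
  have hu_succ : poch (-((n + 1 : ℕ) : ℂ)) (j + 1) / (n + 1).factorial = (n + 1 - j) * u := by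
    rw [poch_neg_div_factorial_eq_sub_mul, ← hu]
    push_cast
    ring
  have c_add_two : gegenbauerCoeff μ (n + 2) (j + 1) =
      c * ((2 * μ + n + j + 1) * (2 * μ + n + j + 2)) := by
    rw [gegenbauerCoeff, ← hu, show n + 2 + (j + 1) = n + j + 1 + 1 + 1 by ring,
      poch_succ _ (n + j + 1 + 1), poch_succ _ (n + j + 1), hc]
    push_cast
    ring
  have c_add_one : gegenbauerCoeff μ (n + 1) (j + 1) = c * ((n + 1 - j) * (2 * μ + n + j + 1)) := by
    rw [gegenbauerCoeff, hu_succ, show n + 1 + (j + 1) = n + j + 1 + 1 by ring,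
      poch_succ _ (n + j + 1), hc]
    push_cast
    ring
  have c_self : gegenbauerCoeff μ n (j + 1) = c * ((n - j) * (n + 1 - j)) := by
    rw [gegenbauerCoeff, poch_neg_div_factorial_eq_sub_mul, hu_succ, ← add_assoc, hc]
    push_cast
    ring
  have c_lower : gegenbauerCoeff μ (n + 1) j = -c * ((μ + 1 / 2 + j) * (j + 1)) := by
    have hμj : μ + 1 / 2 + j ≠ 0 := fun h => hμ j (eq_neg_of_add_eq_zero_left h)
    have hj : (j + 1 : ℂ) ≠ 0 := by exact_mod_cast j.succ_ne_zero
    have hfactors : poch (μ + 1 / 2) (j + 1) * (j + 1).factorial =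
        poch (μ + 1 / 2) j * j.factorial * ((μ + 1 / 2 + j) * (j + 1)) := by
      rw [poch_succ, Nat.factorial_succ]
      push_cast
      ring
    rw [gegenbauerCoeff, poch_neg_div_factorial_eq_neg, ← hu, add_right_comm n 1 j, hc, hfactors,
      neg_mul, neg_mul, neg_div, neg_inj, div_mul_eq_mul_div (u * _),
      mul_div_mul_right _ _ (mul_ne_zero hμj hj)]
  rw [c_add_two, c_add_one, c_self, c_lower]
  ring

theorem gegenbauerC_add_two {μ : ℂ} (hμ : ∀ m : ℕ, μ + 1 / 2 ≠ -(m : ℂ)) (x : ℂ) (n : ℕ) :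
    ((n : ℂ) + 2) * gegenbauerC (n + 2) μ x =
      2 * (n + 1 + μ) * x * gegenbauerC (n + 1) μ x - (n + 2 * μ) * gegenbauerC n μ x := by
  set y := (1 - x) / 2 with hy
  have expand {k : ℕ} (hk : k < n + 4) : gegenbauerC k μ x =
      ∑ j ∈ Finset.range (n + 3), gegenbauerCoeff μ k (j + 1) * y ^ (j + 1) +
        gegenbauerCoeff μ k 0 := by
    rw [gegenbauerC_eq_sum_gegenbauerCoeff μ x hk, Finset.sum_range_succ', pow_zero, mul_one]
  have hshift : y * gegenbauerC (n + 1) μ x =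
      ∑ j ∈ Finset.range (n + 3), gegenbauerCoeff μ (n + 1) j * y ^ (j + 1) := by
    rw [gegenbauerC_eq_sum_gegenbauerCoeff μ x (show n + 1 < n + 3 by omega), Finset.mul_sum]
    exact Finset.sum_congr rfl fun j _ => by ring
  have hterm (j : ℕ) : (n + 2) * (gegenbauerCoeff μ (n + 2) (j + 1) * y ^ (j + 1)) =
      2 * (n + 1 + μ) * (gegenbauerCoeff μ (n + 1) (j + 1) * y ^ (j + 1)) -
        4 * (n + 1 + μ) * (gegenbauerCoeff μ (n + 1) j * y ^ (j + 1)) -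
        (n + 2 * μ) * (gegenbauerCoeff μ n (j + 1) * y ^ (j + 1)) := by
    linear_combination y ^ (j + 1) * gegenbauerCoeff_succ_recurrence hμ n j
  calc ((n : ℂ) + 2) * gegenbauerC (n + 2) μ x
      = 2 * (n + 1 + μ) * (gegenbauerC (n + 1) μ x - 2 * (y * gegenbauerC (n + 1) μ x)) -
          (n + 2 * μ) * gegenbauerC n μ x := by
        rw [hshift, expand (by omega : n < n + 4), expand (by omega : n + 1 < n + 4),
          expand (by omega : n + 2 < n + 4), mul_add, Finset.mul_sum]
        simp only [hterm, Finset.sum_sub_distrib, ← Finset.mul_sum]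
        linear_combination gegenbauerCoeff_zero_recurrence μ n
    _ = _ := by rw [hy]; ring

theorem gegenbauerC_zero (μ x : ℂ) : gegenbauerC 0 μ x = 1 := by
  simp [gegenbauerC, poch_zero]

theorem gegenbauerC_one {μ : ℂ} (hμ : μ + 1 / 2 ≠ 0) (x : ℂ) : gegenbauerC 1 μ x = 2 * μ * x := by
  have hμ' : (-1 * (1 + 2 * μ)) / (μ + 1 / 2) = -2 := by
    rw [div_eq_iff hμ]
    ring
  simp only [gegenbauerC, Finset.sum_range_succ, Finset.sum_range_zero, poch_zero, poch_succ,
    Nat.factorial, Nat.cast_one, Nat.cast_zero, add_zero, zero_add, one_mul, mul_one, pow_zero,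
    pow_one, div_one, hμ']
  ring

theorem natCast_add_mul_mul_gegenbauerC_succ {μ : ℂ} (hμ : ∀ m : ℕ, μ + 1 / 2 ≠ -(m : ℂ)) (x : ℂ)
    (n : ℕ) :
    (n + 1 + μ) * (x * gegenbauerC (n + 1) μ x) =
      (n + 2) / 2 * gegenbauerC (n + 2) μ x + (n + 2 * μ) / 2 * gegenbauerC n μ x := by
  linear_combination -gegenbauerC_add_two hμ x n / 2

end Recurrence

section Growth

open PowerSeries

/-- `f` grows more slowly than every exponential `r⁻ⁿ` with `r < 1`, encoded as: the power series
with coefficients `f` has radius of convergence at least one. -/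
def IsSubexponential (f : ℕ → ℂ) : Prop :=
  ∀ r : ℝ, 0 < r → r < 1 → Summable fun n => ‖f n‖ * r ^ n

theorem isSubexponential_of_tendsto_ratio {f : ℕ → ℂ}
    (hf : Tendsto (fun n => f (n + 1) / f n) atTop (𝓝 1)) : IsSubexponential f := by
  intro r hr0 hr1
  have hf0 : ∀ᶠ n in atTop, f n ≠ 0 := by
    filter_upwards [hf.eventually_ne one_ne_zero] with n hn h
    exact hn (by rw [h, div_zero])
  refine summable_of_ratio_test_tendsto_lt_one hr1
    (hf0.mono fun n hn => mul_ne_zero (norm_ne_zero_iff.mpr hn) (pow_ne_zero n hr0.ne')) ?_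
  have hratio (n : ℕ) : ‖‖f (n + 1)‖ * r ^ (n + 1)‖ / ‖‖f n‖ * r ^ n‖ = ‖f (n + 1) / f n‖ * r := by
    have hrn : r ^ n ≠ 0 := pow_ne_zero n hr0.ne'
    rw [Real.norm_of_nonneg (by positivity), Real.norm_of_nonneg (by positivity), norm_div,
      pow_succ, mul_div_mul_comm, mul_div_cancel_left₀ _ hrn]
  simpa only [hratio, norm_one, one_mul] using hf.norm.mul_const r

namespace IsSubexponential

theorem exists_norm_mul_pow_le {f : ℕ → ℂ} (hf : IsSubexponential f) {r : ℝ} (hr0 : 0 < r)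
    (hr1 : r < 1) : ∃ B, ∀ n, ‖f n‖ * r ^ n ≤ B := by
  obtain ⟨B, hB⟩ := (hf r hr0 hr1).tendsto_atTop_zero.bddAbove_range
  exact ⟨B, fun n => hB ⟨n, rfl⟩⟩

theorem mul {f g : ℕ → ℂ} (hf : IsSubexponential f) (hg : IsSubexponential g) :
    IsSubexponential fun n => f n * g n := by
  intro r hr0 hr1
  have hs0 : 0 < √r := Real.sqrt_pos.mpr hr0
  have hs1 : √r < 1 := (Real.sqrt_lt' one_pos).mpr (by rwa [one_pow])
  obtain ⟨B, hB⟩ := hf.exists_norm_mul_pow_le hs0 hs1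
  refine ((hg (√r) hs0 hs1).mul_left B).of_nonneg_of_le (fun _ => by positivity) fun n => ?_
  calc ‖f n * g n‖ * r ^ n = ‖f n‖ * √r ^ n * (‖g n‖ * √r ^ n) := by
        rw [norm_mul, mul_mul_mul_comm, ← mul_pow, Real.mul_self_sqrt hr0.le]
    _ ≤ B * (‖g n‖ * √r ^ n) := by gcongr; exact hB n

theorem coeff_mul {F G : ℂ⟦X⟧} (hF : IsSubexponential fun n => coeff n F)
    (hG : IsSubexponential fun n => coeff n G) : IsSubexponential fun n => coeff n (F * G) := by
  intro r hr0 hr1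
  have norm_term (z : ℂ) (n : ℕ) : ‖z * (r : ℂ) ^ n‖ = ‖z‖ * r ^ n := by
    rw [norm_mul, norm_pow, Complex.norm_of_nonneg hr0.le]
  have hprod := summable_norm_sum_mul_antidiagonal_of_summable_norm
    (f := fun n => coeff n F * (r : ℂ) ^ n) (g := fun n => coeff n G * (r : ℂ) ^ n)
    (by simpa only [norm_term] using hF r hr0 hr1) (by simpa only [norm_term] using hG r hr0 hr1)
  refine hprod.congr fun n => ?_
  simp only [← norm_term, PowerSeries.coeff_mul, Finset.sum_mul]
  congr 1
  refine Finset.sum_congr rfl fun p hp => ?_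
  rw [← Finset.HasAntidiagonal.mem_antidiagonal.mp hp, pow_add]
  ring

end IsSubexponential

theorem isSubexponential_poch_div_factorial (a : ℂ) :
    IsSubexponential fun n => poch a n / n.factorial := by
  intro r hr0 hr1
  have hr : ‖(r : ℂ)‖ < 1 := by rwa [Complex.norm_of_nonneg hr0.le]
  refine (hasSum_poch_div_factorial_mul_pow a hr).summable.norm.congr fun n => ?_
  rw [norm_mul, norm_pow, Complex.norm_of_nonneg hr0.le]

theorem isSubexponential_factorial_div_poch_succ {a : ℂ} (ha : ∀ m : ℕ, a ≠ -(m : ℂ)) :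
    IsSubexponential fun n => n.factorial / poch a (n + 1) := by
  refine isSubexponential_of_tendsto_ratio ?_
  have hratio (n : ℕ) : ((n + 1).factorial : ℂ) / poch a (n + 1 + 1) /
      (n.factorial / poch a (n + 1)) = (1 + 1 * n) / (a + 1 + 1 * n) := by
    have hf : (n.factorial : ℂ) ≠ 0 := by exact_mod_cast n.factorial_ne_zero
    have hp : poch a (n + 1) ≠ 0 := poch_ne_zero ha _
    rw [div_div_div_comm, poch_succ _ (n + 1), mul_div_cancel_left₀ _ hp, Nat.factorial_succ]
    push_cast
    rw [mul_div_cancel_right₀ _ hf]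
    ring
  simpa only [hratio, div_one] using
    tendsto_add_mul_div_add_mul_atTop_nhds (1 : ℂ) (a + 1) 1 one_ne_zero

theorem isSubexponential_natCast_add (a : ℂ) : IsSubexponential fun n => (n : ℂ) + a := by
  refine isSubexponential_of_tendsto_ratio ?_
  have hratio (n : ℕ) : ((n + 1 : ℕ) + a) / (n + a) = (1 + a + 1 * n) / (a + 1 * n) := by
    push_cast
    ring
  simpa only [hratio, div_one] using
    tendsto_add_mul_div_add_mul_atTop_nhds (1 + a) a 1 one_ne_zero

/-- The binomial expansion of `(1 - w X) ^ (-a)` as a formal power series. -/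
noncomputable def negBinomialSeries (a w : ℂ) : ℂ⟦X⟧ :=
  PowerSeries.mk fun n => poch a n / n.factorial * w ^ n

theorem one_sub_mul_derivative_negBinomialSeries (a w : ℂ) :
    (1 - C w * X) * d⁄dX ℂ (negBinomialSeries a w) = C (a * w) * negBinomialSeries a w := by
  ext n
  have hn : (n + 1 : ℂ) ≠ 0 := by exact_mod_cast n.succ_ne_zero
  have hf : (n.factorial : ℂ) ≠ 0 := by exact_mod_cast n.factorial_ne_zero
  rw [sub_mul, one_mul, mul_assoc, map_sub, coeff_C_mul, coeff_C_mul]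
  cases n with
  | zero => simp [negBinomialSeries, coeff_derivative, poch_succ, poch_zero]
  | succ n =>
    rw [coeff_succ_X_mul]
    simp only [negBinomialSeries, coeff_derivative, coeff_mk, poch_succ _ (n + 1),
      Nat.factorial_succ (n + 1)]
    push_cast at hn ⊢
    field_simp
    ring

theorem quadratic_mul_derivative_negBinomialSeries_mul {w v x : ℂ} (hwv : w * v = 1)
    (hx : w + v = 2 * x) (a : ℂ) :
    (1 - C (2 * x) * X + X ^ 2) * d⁄dX ℂ (negBinomialSeries a w * negBinomialSeries a v) =
      (C (2 * a * x) - C (2 * a) * X) * (negBinomialSeries a w * negBinomialSeries a v) := by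
  have hw := one_sub_mul_derivative_negBinomialSeries a w
  have hv := one_sub_mul_derivative_negBinomialSeries a v
  have hwv' : C w * C v = (1 : ℂ⟦X⟧) := by rw [← map_mul, hwv, map_one]
  have hx' : C w + C v = (2 * C x : ℂ⟦X⟧) := by rw [← map_add, hx, map_mul, map_ofNat]
  simp only [Derivation.leibniz, smul_eq_mul, map_mul, map_ofNat] at hw hv ⊢
  set F := negBinomialSeries a w
  set G := negBinomialSeries a v
  linear_combination (1 - C v * X) * G * hw + (1 - C w * X) * F * hv
    + (X * (F * d⁄dX ℂ G + G * d⁄dX ℂ F) + C a * F * G) * hx'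
    - (X ^ 2 * (F * d⁄dX ℂ G + G * d⁄dX ℂ F) + 2 * C a * X * F * G) * hwv'

theorem coeff_add_two_of_quadratic_mul_derivative {H : ℂ⟦X⟧} {a x : ℂ}
    (hH : (1 - C (2 * x) * X + X ^ 2) * d⁄dX ℂ H = (C (2 * a * x) - C (2 * a) * X) * H) (n : ℕ) :
    ((n : ℂ) + 2) * coeff (n + 2) H =
      2 * (n + 1 + a) * x * coeff (n + 1) H - (n + 2 * a) * coeff n H := by
  have hcoeff := congrArg (coeff (n + 1)) hH
  simp only [add_mul, sub_mul, one_mul, mul_assoc, map_add, map_sub, coeff_C_mul, coeff_succ_X_mul,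
    pow_two, coeff_derivative] at hcoeff
  have euler : coeff n (X * d⁄dX ℂ H) = n * coeff n H := by
    cases n with
    | zero => rw [coeff_zero_X_mul, Nat.cast_zero, zero_mul]
    | succ n => rw [coeff_succ_X_mul, coeff_derivative, Nat.cast_succ, mul_comm]
  rw [euler] at hcoeff
  push_cast at hcoeff
  linear_combination hcoeff

theorem gegenbauerC_eq_coeff {μ : ℂ} (hμ : ∀ m : ℕ, μ + 1 / 2 ≠ -(m : ℂ)) {w v x : ℂ}
    (hwv : w * v = 1) (hx : w + v = 2 * x) (n : ℕ) :
    gegenbauerC n μ x = coeff n (negBinomialSeries μ w * negBinomialSeries μ v) := by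
  induction n using Nat.twoStepInduction with
  | zero => simp [gegenbauerC_zero, negBinomialSeries, poch_zero]
  | one =>
    rw [gegenbauerC_one (by simpa using hμ 0), coeff_one_mul]
    simp only [negBinomialSeries, coeff_mk, ← coeff_zero_eq_constantCoeff_apply, poch_succ,
      poch_zero, Nat.factorial_zero, Nat.factorial_one, Nat.cast_zero, Nat.cast_one, one_mul,
      add_zero, div_one, pow_zero, pow_one, mul_one]
    linear_combination -μ * hx
  | more n ih ih' =>
    have hn : (n + 2 : ℂ) ≠ 0 := by exact_mod_cast (n + 1).succ_ne_zero
    apply mul_left_cancel₀ hn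
    rw [gegenbauerC_add_two hμ, ih, ih', coeff_add_two_of_quadratic_mul_derivative
      (quadratic_mul_derivative_negBinomialSeries_mul hwv hx μ)]

theorem isSubexponential_coeff_negBinomialSeries (a : ℂ) {w : ℂ} (hw : ‖w‖ ≤ 1) :
    IsSubexponential fun n => coeff n (negBinomialSeries a w) := by
  intro r hr0 hr1
  refine (isSubexponential_poch_div_factorial a r hr0 hr1).of_nonneg_of_le
    (fun _ => by positivity) fun n => ?_
  simp only [negBinomialSeries, coeff_mk, norm_mul, norm_pow]
  gcongr
  exact mul_le_of_le_one_right (norm_nonneg _) (pow_le_one₀ (norm_nonneg _) hw)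

theorem isSubexponential_gegenbauerC {μ : ℂ} (hμ : ∀ m : ℕ, μ + 1 / 2 ≠ -(m : ℂ)) {x : ℝ}
    (hx : x ∈ Set.Icc (-1 : ℝ) 1) : IsSubexponential fun n => gegenbauerC n μ x := by
  set θ := Real.arccos x
  have hwv : Complex.exp (θ * I) * Complex.exp ((-θ : ℝ) * I) = 1 := by
    rw [← Complex.exp_add]
    simp
  have hsum : Complex.exp (θ * I) + Complex.exp ((-θ : ℝ) * I) = 2 * x := by
    rw [← Real.cos_arccos hx.1 hx.2, Complex.ofReal_cos, Complex.two_cos]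
    simp [θ]
  simp only [gegenbauerC_eq_coeff hμ hwv hsum]
  exact (isSubexponential_coeff_negBinomialSeries μ (norm_exp_ofReal_mul_I _).le).coeff_mul
    (isSubexponential_coeff_negBinomialSeries μ (norm_exp_ofReal_mul_I _).le)

end Growth

section ConnectionCoefficients

/-- The coefficient of `(n + μ) C_n^μ(x)` in the Gegenbauer expansion of `x ^ m`; it vanishes unless
`m - n` is a nonnegative even integer. -/
noncomputable def connectionCoeff (μ : ℂ) (m n : ℕ) : ℂ :=
  if n ≤ m ∧ 2 ∣ m - n then
    m.factorial / 2 ^ m / (((m - n) / 2).factorial * poch μ (n + (m - n) / 2 + 1))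
  else 0

theorem connectionCoeff_add_two_mul (μ : ℂ) (n k : ℕ) :
    connectionCoeff μ (n + 2 * k) n =
      (n + 2 * k).factorial / 2 ^ (n + 2 * k) / (k.factorial * poch μ (n + k + 1)) := by
  rw [connectionCoeff, if_pos ⟨by omega, k, by omega⟩, show (n + 2 * k - n) / 2 = k by omega]

theorem connectionCoeff_eq_zero (μ : ℂ) {m n : ℕ} (h : ∀ k, m ≠ n + 2 * k) :
    connectionCoeff μ m n = 0 :=
  if_neg fun ⟨_, k, hk⟩ => h k (by omega)

theorem connectionCoeff_succ_zero (μ : ℂ) (m : ℕ) :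
    connectionCoeff μ (m + 1) 0 = connectionCoeff μ m 1 := by
  by_cases h : ∃ k, m = 1 + 2 * k
  · obtain ⟨k, rfl⟩ := h
    have hk : (k + 1 : ℂ) ≠ 0 := by exact_mod_cast k.succ_ne_zero
    rw [connectionCoeff_add_two_mul, show 1 + 2 * k + 1 = 0 + 2 * (k + 1) by ring,
      connectionCoeff_add_two_mul, show 0 + 2 * (k + 1) = 1 + 2 * k + 1 by ring,
      Nat.factorial_succ, Nat.factorial_succ k, show 0 + (k + 1) + 1 = 1 + k + 1 by ring, pow_succ]
    push_cast
    rw [show 1 + 2 * (k : ℂ) + 1 = 2 * (k + 1) by ring]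
    simp only [div_eq_mul_inv, mul_inv]
    field_simp
  · push Not at h
    rw [connectionCoeff_eq_zero μ h, connectionCoeff_eq_zero μ fun k hk => h (k - 1) (by omega)]

theorem connectionCoeff_succ_succ {μ : ℂ} (hμ : ∀ m : ℕ, μ ≠ -(m : ℂ)) (m n : ℕ) :
    (n + 1 + μ) * connectionCoeff μ (m + 1) (n + 1) =
      (n + 1) / 2 * connectionCoeff μ m n + (n + 1 + 2 * μ) / 2 * connectionCoeff μ m (n + 2) := by
  by_cases h : ∃ k, m = n + 2 * k
  · obtain ⟨k, rfl⟩ := h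
    set d : ℂ :=
      (n + 2 * k).factorial / 2 ^ (n + 2 * k) / (k.factorial * poch μ (n + k + 2)) with hd
    have h_same : connectionCoeff μ (n + 2 * k) n = d * (n + k + 1 + μ) := by
      have hμk : μ + (n + k + 1 : ℕ) ≠ 0 := fun h => hμ _ (eq_neg_of_add_eq_zero_left h)
      rw [connectionCoeff_add_two_mul, hd, poch_succ _ (n + k + 1), ← mul_assoc,
        div_mul_eq_div_div _ _ (μ + _),
        show (n : ℂ) + k + 1 + μ = μ + (n + k + 1 : ℕ) by push_cast; ring, div_mul_cancel₀ _ hμk]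
    have h_up : connectionCoeff μ (n + 2 * k + 1) (n + 1) = d * ((n + 2 * k + 1) / 2) := by
      rw [show n + 2 * k + 1 = n + 1 + 2 * k by ring, connectionCoeff_add_two_mul,
        show n + 1 + 2 * k = n + 2 * k + 1 by ring, Nat.factorial_succ, pow_succ, hd,
        show n + 1 + k + 1 = n + k + 2 by ring]
      push_cast
      ring
    have h_down : connectionCoeff μ (n + 2 * k) (n + 2) = d * k := by
      cases k with
      | zero =>
        rw [connectionCoeff_eq_zero μ fun k => by omega, Nat.cast_zero, mul_zero]
      | succ k =>
        have hk : ((k + 1 : ℕ) : ℂ) ≠ 0 := by exact_mod_cast k.succ_ne_zero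
        have hfactorial : ((k + 1).factorial : ℂ) = k.factorial * (k + 1 : ℕ) := by
          rw [Nat.factorial_succ, Nat.cast_mul, mul_comm]
        rw [hd, show n + 2 * (k + 1) = n + 2 + 2 * k by ring, connectionCoeff_add_two_mul,
          hfactorial, mul_right_comm, div_mul_eq_div_div _ _ ((k + 1 : ℕ) : ℂ),
          div_mul_cancel₀ _ hk, show n + 2 + k + 1 = n + (k + 1) + 2 by ring]
    rw [h_up, h_same, h_down]
    ring
  · push Not at h
    rw [connectionCoeff_eq_zero μ h, connectionCoeff_eq_zero μ fun k hk => h k (by omega),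
      connectionCoeff_eq_zero μ fun k hk => h (k + 1) (by omega)]
    ring

theorem mul_sum_natCast_add_mul_gegenbauerC {μ : ℂ} (hμ : ∀ m : ℕ, μ + 1 / 2 ≠ -(m : ℂ)) (x : ℂ)
    (c : ℕ → ℂ) (N : ℕ) :
    x * ∑ n ∈ Finset.range (N + 1), c n * ((n + μ) * gegenbauerC n μ x) =
      ∑ n ∈ Finset.range N, (n + 2 * μ) / 2 * c (n + 1) * gegenbauerC n μ x +
        ∑ n ∈ Finset.range (N + 1), (n + 1) / 2 * c n * gegenbauerC (n + 1) μ x := by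
  induction N with
  | zero =>
    simp only [zero_add, Finset.sum_range_one, Finset.sum_range_zero, gegenbauerC_zero,
      gegenbauerC_one (by simpa using hμ 0), Nat.cast_zero]
    ring
  | succ N ih =>
    rw [Finset.sum_range_succ _ N, Finset.sum_range_succ _ (N + 1),
      Finset.sum_range_succ _ (N + 1), mul_add, ih]
    push_cast
    linear_combination c (N + 1) * natCast_add_mul_mul_gegenbauerC_succ hμ x N

theorem pow_eq_sum_connectionCoeff_mul_gegenbauerC {μ : ℂ} (hμ : ∀ m : ℕ, μ ≠ -(m : ℂ))
    (hμ' : ∀ m : ℕ, μ + 1 / 2 ≠ -(m : ℂ)) (x : ℂ) (m : ℕ) :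
    x ^ m = ∑ n ∈ Finset.range (m + 1),
      connectionCoeff μ m n * ((n + μ) * gegenbauerC n μ x) := by
  induction m with
  | zero =>
    have hμ0 : μ ≠ 0 := by simpa using hμ 0
    have hconn := connectionCoeff_add_two_mul μ 0 0
    simp only [mul_zero, add_zero, zero_add, pow_zero, Nat.factorial_zero, Nat.cast_one, div_one,
      one_mul, poch_succ, poch_zero, Nat.cast_zero] at hconn
    rw [zero_add, Finset.sum_range_one, hconn, gegenbauerC_zero, Nat.cast_zero, zero_add, pow_zero,
      mul_one, one_div_mul_cancel hμ0]
  | succ m ih =>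
    have hrec (n : ℕ) : connectionCoeff μ (m + 1) (n + 1) *
          (((n + 1 : ℕ) + μ) * gegenbauerC (n + 1) μ x) =
        ((n + 1 : ℕ) + 2 * μ) / 2 * connectionCoeff μ m (n + 1 + 1) * gegenbauerC (n + 1) μ x +
          (n + 1) / 2 * connectionCoeff μ m n * gegenbauerC (n + 1) μ x := by
      push_cast
      linear_combination gegenbauerC (n + 1) μ x * connectionCoeff_succ_succ hμ m n
    have hextend :
        ∑ n ∈ Finset.range m, (n + 2 * μ) / 2 * connectionCoeff μ m (n + 1) * gegenbauerC n μ x =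
          ∑ n ∈ Finset.range (m + 2),
            (n + 2 * μ) / 2 * connectionCoeff μ m (n + 1) * gegenbauerC n μ x := by
      rw [Finset.sum_range_succ, Finset.sum_range_succ,
        connectionCoeff_eq_zero μ (n := m + 1) fun k => by omega,
        connectionCoeff_eq_zero μ (n := m + 1 + 1) fun k => by omega]
      ring
    rw [pow_succ', ih, mul_sum_natCast_add_mul_gegenbauerC hμ', hextend,
      Finset.sum_range_succ' _ (m + 1), Finset.sum_range_succ' _ (m + 1)]
    simp only [hrec, Finset.sum_add_distrib, connectionCoeff_succ_zero, Nat.cast_zero, zero_add]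
    ring

theorem norm_connectionCoeff_add_two_mul_le (μ : ℂ) (n k : ℕ) :
    ‖connectionCoeff μ (n + 2 * k) n‖ ≤ ‖((n + k).factorial : ℂ) / poch μ (n + k + 1)‖ := by
  have hchoose : ((n + 2 * k).factorial : ℝ) ≤
      2 ^ (n + 2 * k) * (k.factorial * (n + k).factorial) := by
    have hfactorial := Nat.choose_mul_factorial_mul_factorial (show k ≤ n + 2 * k by omega)
    rw [show n + 2 * k - k = n + k by omega, mul_assoc] at hfactorial
    rw [← hfactorial]
    push_cast
    gcongr
    exact_mod_cast Nat.choose_le_two_pow _ _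
  rw [connectionCoeff_add_two_mul, div_mul_eq_div_div, norm_div, norm_div _ (poch _ _)]
  gcongr
  rw [div_div, norm_div, norm_mul, norm_pow, Complex.norm_natCast, Complex.norm_natCast,
    Complex.norm_natCast, Complex.norm_ofNat, div_le_iff₀ (by positivity)]
  linarith

end ConnectionCoefficients

section GegenbauerExpansion

theorem IsSubexponential.summable_mul_pow_add_two_mul {f g h : ℕ → ℂ} (hf : IsSubexponential f)
    (hg : IsSubexponential g) (hh : IsSubexponential h) {t : ℂ} (ht : ‖t‖ < 1) :
    Summable fun p : ℕ × ℕ =>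
      f (p.1 + 2 * p.2) * t ^ (p.1 + 2 * p.2) * (g (p.1 + p.2) * h p.1) := by
  obtain ⟨s, hs0, hs1, hts⟩ : ∃ s : ℝ, 0 < s ∧ s < 1 ∧ ‖t‖ ≤ s ^ 3 := by
    have bernoulli := one_add_mul_le_pow (show -2 ≤ (‖t‖ - 1) / 3 by linarith [norm_nonneg t]) 3
    refine ⟨1 + (‖t‖ - 1) / 3, by linarith [norm_nonneg t], by linarith, ?_⟩
    push_cast at bernoulli
    linarith
  obtain ⟨A, hA⟩ := hf.exists_norm_mul_pow_le hs0 hs1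
  obtain ⟨B, hB⟩ := hg.exists_norm_mul_pow_le hs0 hs1
  have hA0 : 0 ≤ A := (by positivity : 0 ≤ ‖f 0‖ * s ^ 0).trans (hA 0)
  have hgeom : Summable fun k : ℕ => (s ^ 3) ^ k :=
    summable_geometric_of_lt_one (by positivity) (pow_lt_one₀ hs0.le hs1 three_ne_zero)
  refine (((hh s hs0 hs1).mul_of_nonneg hgeom (fun _ => by positivity)
    fun _ => by positivity).mul_left (A * B)).of_norm_bounded ?_
  rintro ⟨n, k⟩
  calc ‖f (n + 2 * k) * t ^ (n + 2 * k) * (g (n + k) * h n)‖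
      = ‖f (n + 2 * k)‖ * ‖t‖ ^ (n + 2 * k) * (‖g (n + k)‖ * ‖h n‖) := by
        simp only [norm_mul, norm_pow]
    _ ≤ ‖f (n + 2 * k)‖ * (s ^ 3) ^ (n + 2 * k) * (‖g (n + k)‖ * ‖h n‖) := by gcongr
    _ = (‖f (n + 2 * k)‖ * s ^ (n + 2 * k)) * (‖g (n + k)‖ * s ^ (n + k)) *
          (‖h n‖ * s ^ n * (s ^ 3) ^ k) := by ring
    _ ≤ A * B * (‖h n‖ * s ^ n * (s ^ 3) ^ k) := by
        gcongr
        exacts [hA _, hB _]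

variable {μ t : ℂ} {f : ℕ → ℂ} {x : ℝ}

theorem summable_mul_pow_mul_connectionCoeff (hμ : ∀ m : ℕ, μ ≠ -(m : ℂ))
    (hμ' : ∀ m : ℕ, μ + 1 / 2 ≠ -(m : ℂ)) (hf : IsSubexponential f) (ht : ‖t‖ < 1)
    (hx : x ∈ Set.Icc (-1 : ℝ) 1) :
    Summable fun p : ℕ × ℕ => f (p.1 + 2 * p.2) * t ^ (p.1 + 2 * p.2) *
      (connectionCoeff μ (p.1 + 2 * p.2) p.1 * ((p.1 + μ) * gegenbauerC p.1 μ x)) := by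
  refine (hf.summable_mul_pow_add_two_mul (isSubexponential_factorial_div_poch_succ hμ)
    ((isSubexponential_natCast_add μ).mul (isSubexponential_gegenbauerC hμ' hx))
    ht).norm.of_norm_bounded ?_
  rintro ⟨n, k⟩
  simp only [norm_mul]
  gcongr
  exact norm_connectionCoeff_add_two_mul_le μ n k

theorem hasSum_mul_pow_mul_connectionCoeff (hμ : ∀ m : ℕ, μ ≠ -(m : ℂ))
    (hμ' : ∀ m : ℕ, μ + 1 / 2 ≠ -(m : ℂ)) (hf : IsSubexponential f) (ht : ‖t‖ < 1)
    (hx : x ∈ Set.Icc (-1 : ℝ) 1) {S : ℂ} (hS : HasSum (fun m => f m * (x * t) ^ m) S) :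
    HasSum (fun p : ℕ × ℕ => f (p.1 + 2 * p.2) * t ^ (p.1 + 2 * p.2) *
      (connectionCoeff μ (p.1 + 2 * p.2) p.1 * ((p.1 + μ) * gegenbauerC p.1 μ x))) S := by
  set F : ℕ × ℕ → ℂ := fun q => f q.1 * t ^ q.1 *
    (connectionCoeff μ q.1 q.2 * ((q.2 + μ) * gegenbauerC q.2 μ x)) with hF
  set reindex : ℕ × ℕ → ℕ × ℕ := fun p => (p.1 + 2 * p.2, p.1) with hreindex
  have hinj : Function.Injective reindex := by
    rintro ⟨n, k⟩ ⟨n', k'⟩ h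
    simp only [hreindex, Prod.mk.injEq] at h ⊢
    omega
  have hvanish {m n : ℕ} (h : ∀ k, m ≠ n + 2 * k) : F (m, n) = 0 := by
    simp only [hF, connectionCoeff_eq_zero μ h, zero_mul, mul_zero]
  have hsupport : ∀ q, q ∉ Set.range reindex → F q = 0 := fun ⟨m, n⟩ hq =>
    hvanish fun k hk => hq ⟨(n, k), by rw [hk]⟩
  have hsummable : Summable F := (hinj.summable_iff hsupport).mp
    (summable_mul_pow_mul_connectionCoeff hμ hμ' hf ht hx)
  have hrow (m : ℕ) : HasSum (fun n => F (m, n)) (f m * (x * t) ^ m) := by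
    have hexpand : f m * (x * t) ^ m = ∑ n ∈ Finset.range (m + 1), F (m, n) := by
      rw [mul_pow, pow_eq_sum_connectionCoeff_mul_gegenbauerC hμ hμ' x, mul_comm (Finset.sum _ _),
        ← mul_assoc, Finset.mul_sum]
    rw [hexpand]
    refine hasSum_sum_of_ne_finset_zero fun n hn => hvanish fun k hk => hn ?_
    exact Finset.mem_range.mpr (by omega)
  rw [hS.unique (hsummable.hasSum.prod_fiberwise hrow)]
  exact (hinj.hasSum_iff hsupport).mpr hsummable.hasSum

theorem mul_pow_mul_connectionCoeff_eq_hypergeometric_term (ν : ℂ) (hμ : ∀ m : ℕ, μ ≠ -(m : ℂ))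
    (t c : ℂ) (n k : ℕ) :
    poch ν (n + 2 * k) / (n + 2 * k).factorial * t ^ (n + 2 * k) *
        (connectionCoeff μ (n + 2 * k) n * ((n + μ) * c)) =
      t ^ n / 2 ^ n * (poch ν n / poch μ n) * c *
        (poch ((n + ν + 1) / 2) k * poch ((n + ν) / 2) k / (poch (n + μ + 1) k * k.factorial) *
          (t ^ 2) ^ k) := by
  have hf : ((n + 2 * k).factorial : ℂ) ≠ 0 := by exact_mod_cast (n + 2 * k).factorial_ne_zero
  have hn : (n : ℂ) + μ ≠ 0 := fun h => hμ n (eq_neg_of_add_eq_zero_right h)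
  have hdenom : poch μ (n + k + 1) = poch μ n * (n + μ) * poch (n + μ + 1) k := by
    rw [add_right_comm, poch_add μ (n + 1), poch_succ, Nat.cast_succ, add_comm μ n,
      show μ + ((n : ℂ) + 1) = n + μ + 1 by ring]
  rw [poch_half_mul_poch_half, connectionCoeff_add_two_mul, hdenom, poch_add ν, add_comm (n : ℂ) ν,
    show (4 : ℂ) ^ k = 2 ^ (2 * k) by rw [pow_mul]; norm_num]
  field_simp
  ring

theorem hasSum_gegenbauerC_hyp2F1 (ν : ℂ) (hμ : ∀ m : ℕ, μ ≠ -(m : ℂ))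
    (hμ' : ∀ m : ℕ, μ + 1 / 2 ≠ -(m : ℂ)) (ht : ‖t‖ < 1) (hx : x ∈ Set.Icc (-1 : ℝ) 1) :
    HasSum (fun n : ℕ => t ^ n / 2 ^ n * (poch ν n / poch μ n) * gegenbauerC n μ x *
        hyp2F1 ((n + ν + 1) / 2) ((n + ν) / 2) (n + μ + 1) (t ^ 2)) (1 / (1 - x * t) ^ ν) := by
  have hxt : ‖(x : ℂ) * t‖ < 1 := by
    rw [norm_mul, Complex.norm_real]
    exact (mul_le_of_le_one_left (norm_nonneg t) (abs_le.mpr hx)).trans_lt ht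
  have hpairs := hasSum_mul_pow_mul_connectionCoeff hμ hμ' (isSubexponential_poch_div_factorial ν)
    ht hx (hasSum_poch_div_factorial_mul_pow ν hxt)
  have hrows := hpairs.prod_fiberwise fun n => (hpairs.summable.prod_factor n).hasSum
  simpa only [mul_pow_mul_connectionCoeff_eq_hypergeometric_term ν hμ, tsum_mul_left, hyp2F1]
    using hrows

end GegenbauerExpansion

section LegendreQ

theorem ofReal_sq_cpow_half {r : ℝ} (hr : 0 ≤ r) (s : ℂ) :
    ((r : ℂ) ^ 2) ^ (s / 2) = (r : ℂ) ^ s := by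
  rw [sq, Complex.mul_cpow_ofReal_nonneg hr hr, ← sq, ← Complex.cpow_nat_mul]
  congr 1
  push_cast
  ring

theorem ofReal_div_two_mul_cpow {a ρ : ℝ} (ha : 0 ≤ a) (hρ : 0 ≤ ρ) (s : ℂ) :
    ((a : ℂ) / (2 * ρ)) ^ s = (a : ℂ) ^ s / (2 ^ s * (ρ : ℂ) ^ s) := by
  rw [← Complex.ofReal_ofNat, ← Complex.mul_cpow_ofReal_nonneg zero_le_two hρ,
    ← Complex.ofReal_mul, ← Complex.div_cpow_ofReal_nonneg ha (by positivity)]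

variable {ρ : ℝ}

theorem joukowsky_sq_sub_one_cpow_half (hρ0 : 0 < ρ) (hρ1 : ρ ≤ 1) (b : ℂ) :
    (((1 + (ρ : ℂ) ^ 2) / (2 * ρ)) ^ 2 - 1) ^ (b / 2) =
      (1 - (ρ : ℂ) ^ 2) ^ b / (2 ^ b * (ρ : ℂ) ^ b) := by
  have hsub : 0 ≤ 1 - ρ ^ 2 := by nlinarith
  have hρ : (ρ : ℂ) ≠ 0 := Complex.ofReal_ne_zero.mpr hρ0.ne'
  have hsq : ((1 + (ρ : ℂ) ^ 2) / (2 * ρ)) ^ 2 - 1 = (((1 - ρ ^ 2) / (2 * ρ) : ℝ) : ℂ) ^ 2 := by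
    push_cast
    field_simp
    ring
  have hdiv : (((1 - ρ ^ 2) / (2 * ρ) : ℝ) : ℂ) = ((1 - ρ ^ 2 : ℝ) : ℂ) / (2 * ρ) := by
    push_cast
    rfl
  rw [hsq, ofReal_sq_cpow_half (by positivity), hdiv, ofReal_div_two_mul_cpow hsub hρ0.le]
  push_cast
  rfl

theorem legendreQ_joukowsky (hρ0 : 0 < ρ) (hρ1 : ρ ≤ 1) (a b : ℂ) :
    legendreQ a b ((1 + (ρ : ℂ) ^ 2) / (2 * ρ)) =
      (Real.sqrt Real.pi : ℂ) * Complex.exp (Real.pi * I * b) *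
          (Complex.Gamma (a + b + 1) / Complex.Gamma (a + 3 / 2)) *
          ((1 - (ρ : ℂ) ^ 2) ^ b * (ρ : ℂ) ^ (a + 1) / (1 + (ρ : ℂ) ^ 2) ^ (a + b + 1)) *
        hyp2F1 ((a + b + 2) / 2) ((a + b + 1) / 2) (a + 3 / 2) ((2 * ρ / (1 + ρ ^ 2)) ^ 2) := by
  have hρ : (ρ : ℂ) ≠ 0 := Complex.ofReal_ne_zero.mpr hρ0.ne'
  have hadd : 0 ≤ 1 + ρ ^ 2 := by positivity
  have hz : ((1 + (ρ : ℂ) ^ 2) / (2 * ρ)) ^ (a + b + 1) =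
      (1 + (ρ : ℂ) ^ 2) ^ (a + b + 1) / (2 ^ (a + b + 1) * (ρ : ℂ) ^ (a + b + 1)) := by
    exact_mod_cast ofReal_div_two_mul_cpow hadd hρ0.le (a + b + 1)
  have hsplit {w : ℂ} (hw : w ≠ 0) : w ^ (a + b + 1) = w ^ (a + 1) * w ^ b := by
    rw [add_right_comm, Complex.cpow_add _ _ hw]
  have h2a : (2 : ℂ) ^ (a + 1) ≠ 0 := by simp [Complex.cpow_eq_zero_iff]
  have h2b : (2 : ℂ) ^ b ≠ 0 := by simp [Complex.cpow_eq_zero_iff]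
  have hρb : (ρ : ℂ) ^ b ≠ 0 := by simp [Complex.cpow_eq_zero_iff, hρ]
  rw [legendreQ, joukowsky_sq_sub_one_cpow_half hρ0 hρ1, hz, hsplit two_ne_zero, hsplit hρ,
    one_div, ← inv_pow, inv_div]
  field_simp

end LegendreQ

section GeneratingFunction

variable {μ ν : ℂ} {x ρ : ℝ}

theorem natCast_add_mul_Gamma_div_Gamma (hμ : ∀ m : ℕ, μ ≠ -(m : ℂ)) (hν : ∀ m : ℕ, ν ≠ -(m : ℂ))
    (n : ℕ) :
    (n + μ) * (Complex.Gamma (n + ν) / Complex.Gamma (n + μ + 1)) =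
      Complex.Gamma ν / Complex.Gamma μ * (poch ν n / poch μ n) := by
  have hn : (n : ℂ) + μ ≠ 0 := fun h => hμ n (eq_neg_of_add_eq_zero_right h)
  rw [Complex.Gamma_add_one _ hn, Gamma_natCast_add hμ, Gamma_natCast_add hν]
  field_simp

theorem cpow_div_one_add_sq_cpow (hρ : ρ ≠ 0) (μ ν : ℂ) (n : ℕ) :
    (ρ : ℂ) ^ (n + μ) / (1 + (ρ : ℂ) ^ 2) ^ (n + ν) =
      (ρ : ℂ) ^ μ / (1 + (ρ : ℂ) ^ 2) ^ ν * ((2 * ρ / (1 + ρ ^ 2)) ^ n / 2 ^ n) := by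
  have hadd : 1 + (ρ : ℂ) ^ 2 ≠ 0 := by exact_mod_cast (show 0 < 1 + ρ ^ 2 by positivity).ne'
  rw [Complex.cpow_add _ _ (Complex.ofReal_ne_zero.mpr hρ), Complex.cpow_add _ _ hadd,
    Complex.cpow_natCast, Complex.cpow_natCast, div_pow, mul_pow]
  field_simp

theorem natCast_add_mul_legendreQ_joukowsky (hμ : ∀ m : ℕ, μ ≠ -(m : ℂ))
    (hν : ∀ m : ℕ, ν ≠ -(m : ℂ)) (hρ0 : 0 < ρ) (hρ1 : ρ ≤ 1) (n : ℕ) :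
    (n + μ) * legendreQ (n + μ - 1 / 2) (ν - μ - 1 / 2) ((1 + (ρ : ℂ) ^ 2) / (2 * ρ)) =
      (Real.sqrt Real.pi : ℂ) * Complex.exp (Real.pi * I * (ν - μ - 1 / 2)) *
          (Complex.Gamma ν / Complex.Gamma μ) *
          ((1 - (ρ : ℂ) ^ 2) ^ (ν - μ - 1 / 2) *
            ((ρ : ℂ) ^ (μ + 1 / 2) / (1 + (ρ : ℂ) ^ 2) ^ ν)) *
        ((2 * ρ / (1 + ρ ^ 2)) ^ n / 2 ^ n * (poch ν n / poch μ n) *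
          hyp2F1 ((n + ν + 1) / 2) ((n + ν) / 2) (n + μ + 1) ((2 * ρ / (1 + ρ ^ 2)) ^ 2)) := by
  rw [legendreQ_joukowsky hρ0 hρ1,
    show (n : ℂ) + μ - 1 / 2 + (ν - μ - 1 / 2) + 2 = n + ν + 1 by ring,
    show (n : ℂ) + μ - 1 / 2 + (ν - μ - 1 / 2) + 1 = n + ν by ring,
    show (n : ℂ) + μ - 1 / 2 + 3 / 2 = n + μ + 1 by ring,
    show (n : ℂ) + μ - 1 / 2 + 1 = n + (μ + 1 / 2) by ring,
    mul_div_assoc, cpow_div_one_add_sq_cpow hρ0.ne']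
  linear_combination (Real.sqrt Real.pi : ℂ) * Complex.exp (Real.pi * I * (ν - μ - 1 / 2)) *
    ((1 - (ρ : ℂ) ^ 2) ^ (ν - μ - 1 / 2) *
      ((ρ : ℂ) ^ (μ + 1 / 2) / (1 + (ρ : ℂ) ^ 2) ^ ν)) * ((2 * ρ / (1 + ρ ^ 2)) ^ n / 2 ^ n) *
    hyp2F1 ((n + ν + 1) / 2) ((n + ν) / 2) (n + μ + 1) ((2 * ρ / (1 + ρ ^ 2)) ^ 2) *
    natCast_add_mul_Gamma_div_Gamma hμ hν n

theorem generating_prefactor_mul_legendreQ_prefactor (hμ : ∀ m : ℕ, μ ≠ -(m : ℂ))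
    (hν : ∀ m : ℕ, ν ≠ -(m : ℂ)) (hρ0 : 0 < ρ) (hρ1 : ρ < 1) :
    Complex.Gamma μ * Complex.exp (Real.pi * I * (μ - ν + 1 / 2)) /
          ((Real.sqrt Real.pi : ℂ) * Complex.Gamma ν * (ρ : ℂ) ^ (μ + 1 / 2) *
            (1 - (ρ : ℂ) ^ 2) ^ (ν - μ - 1 / 2)) *
        ((Real.sqrt Real.pi : ℂ) * Complex.exp (Real.pi * I * (ν - μ - 1 / 2)) *
          (Complex.Gamma ν / Complex.Gamma μ) *
          ((1 - (ρ : ℂ) ^ 2) ^ (ν - μ - 1 / 2) *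
            ((ρ : ℂ) ^ (μ + 1 / 2) / (1 + (ρ : ℂ) ^ 2) ^ ν))) =
      1 / (1 + (ρ : ℂ) ^ 2) ^ ν := by
  have hρ : (ρ : ℂ) ≠ 0 := Complex.ofReal_ne_zero.mpr hρ0.ne'
  have hsub : 1 - (ρ : ℂ) ^ 2 ≠ 0 := by exact_mod_cast (show 0 < 1 - ρ ^ 2 by nlinarith).ne'
  have hsqrt : (Real.sqrt Real.pi : ℂ) ≠ 0 := by exact_mod_cast (Real.sqrt_pos.mpr Real.pi_pos).ne'
  have hΓμ : Complex.Gamma μ ≠ 0 := Complex.Gamma_ne_zero hμ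
  have hΓν : Complex.Gamma ν ≠ 0 := Complex.Gamma_ne_zero hν
  have hρpow : (ρ : ℂ) ^ (μ + 1 / 2) ≠ 0 := by simp [Complex.cpow_eq_zero_iff, hρ]
  have hsubpow : (1 - (ρ : ℂ) ^ 2) ^ (ν - μ - 1 / 2) ≠ 0 := by
    simp [Complex.cpow_eq_zero_iff, hsub]
  have hexp : Complex.exp (Real.pi * I * (ν - μ - 1 / 2)) =
      (Complex.exp (Real.pi * I * (μ - ν + 1 / 2)))⁻¹ := by
    rw [← Complex.exp_neg]
    congr 1
    ring
  rw [hexp]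
  generalize (ρ : ℂ) ^ (μ + 1 / 2) = ρpow at *
  generalize (1 - (ρ : ℂ) ^ 2) ^ (ν - μ - 1 / 2) = subpow at *
  field_simp

theorem one_add_sq_sub_two_mul_cpow (hx : x ∈ Set.Icc (-1 : ℝ) 1) (ρ : ℝ) (ν : ℂ) :
    (1 + (ρ : ℂ) ^ 2 - 2 * ρ * x) ^ ν =
      (1 + (ρ : ℂ) ^ 2) ^ ν * (1 - x * (2 * ρ / (1 + ρ ^ 2))) ^ ν := by
  have hadd : 0 < 1 + ρ ^ 2 := by positivity
  have hfactor : 1 + ρ ^ 2 - 2 * ρ * x = (1 + ρ ^ 2) * (1 - x * (2 * ρ / (1 + ρ ^ 2))) := by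
    field_simp
  have hnonneg : 0 ≤ 1 - x * (2 * ρ / (1 + ρ ^ 2)) := by
    refine nonneg_of_mul_nonneg_right (hfactor ▸ ?_) hadd
    nlinarith [hx.1, hx.2, sq_nonneg (ρ - x)]
  have hcpow := Complex.mul_cpow_ofReal_nonneg hadd.le hnonneg ν
  rw [← Complex.ofReal_mul, ← hfactor] at hcpow
  exact_mod_cast hcpow

theorem gegenbauer_generating_generalization_rho_general (ν : ℂ) (hν : ∀ m : ℕ, ν ≠ -(m : ℂ))
    (μ : ℂ) (hμ : ∀ m : ℕ, 2 * μ ≠ -(m : ℂ)) (x : ℝ) (hx : x ∈ Set.Icc (-1 : ℝ) 1)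
    (ρ : ℝ) (hρ0 : 0 < ρ) (hρ1 : ρ < 1) :
    HasSum (fun n : ℕ =>
        Complex.Gamma μ * Complex.exp (Real.pi * I * (μ - ν + 1 / 2)) /
          ((Real.sqrt Real.pi : ℂ) * Complex.Gamma ν * (ρ : ℂ) ^ (μ + 1 / 2) *
            (1 - (ρ : ℂ) ^ 2) ^ (ν - μ - 1 / 2)) *
        ((n + μ) * legendreQ (n + μ - 1 / 2) (ν - μ - 1 / 2) ((1 + (ρ : ℂ) ^ 2) / (2 * ρ)) *
          gegenbauerC n μ x))
      (1 / (1 + (ρ : ℂ) ^ 2 - 2 * ρ * x) ^ ν) := by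
  have hμ_int (m : ℕ) : μ ≠ -(m : ℂ) := fun h => hμ (2 * m) (by rw [h]; push_cast; ring)
  have hμ_half (m : ℕ) : μ + 1 / 2 ≠ -(m : ℂ) := fun h =>
    hμ (2 * m + 1) (by push_cast; linear_combination 2 * h)
  have ht : ‖(2 * ρ / (1 + ρ ^ 2) : ℂ)‖ < 1 := by
    rw [show (2 * ρ / (1 + ρ ^ 2) : ℂ) = ((2 * ρ / (1 + ρ ^ 2) : ℝ) : ℂ) by push_cast; rfl,
      Complex.norm_of_nonneg (by positivity), div_lt_one (by positivity)]
    nlinarith [mul_pos (sub_pos.mpr hρ1) (sub_pos.mpr hρ1)]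
  rw [one_add_sq_sub_two_mul_cpow hx, ← one_div_mul_one_div]
  refine ((hasSum_gegenbauerC_hyp2F1 ν hμ_int hμ_half ht hx).mul_left
    (1 / (1 + (ρ : ℂ) ^ 2) ^ ν)).congr_fun fun n => ?_
  rw [natCast_add_mul_legendreQ_joukowsky hμ_int hν hρ0 hρ1.le,
    ← generating_prefactor_mul_legendreQ_prefactor hμ_int hν hρ0 hρ1]
  ring

end GeneratingFunction

/-- the alternate form of the generalized generating function,
with `z = (1+ρ²)/(2ρ)` for `0 < ρ < 1`. -/
theorem gegenbauer_generating_generalization_rho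
    (ν : ℂ) (hν : ∀ m : ℕ, ν ≠ -(m : ℂ))
    (μ : ℝ) (hμ1 : -(1 / 2) < μ) (hμ2 : μ ≠ 0)
    (x : ℝ) (hx : x ∈ Set.Icc (-1 : ℝ) 1)
    (ρ : ℝ) (hρ0 : 0 < ρ) (hρ1 : ρ < 1) :
    1 / (1 + (ρ : ℂ) ^ 2 - 2 * (ρ : ℂ) * (x : ℂ)) ^ ν =
      Complex.Gamma (μ : ℂ) * Complex.exp (Real.pi * I * ((μ : ℂ) - ν + 1 / 2)) /
        ((Real.sqrt Real.pi : ℂ) * Complex.Gamma ν * (ρ : ℂ) ^ ((μ : ℂ) + 1 / 2) *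
          (1 - (ρ : ℂ) ^ 2) ^ (ν - (μ : ℂ) - 1 / 2)) *
        ∑' n : ℕ,
          ((n : ℂ) + (μ : ℂ)) *
            legendreQ ((n : ℂ) + (μ : ℂ) - 1 / 2) (ν - (μ : ℂ) - 1 / 2)
              ((1 + (ρ : ℂ) ^ 2) / (2 * (ρ : ℂ))) *
            gegenbauerC n (μ : ℂ) (x : ℂ) := by
  have hμ (m : ℕ) : 2 * (μ : ℂ) ≠ -(m : ℂ) := by
    intro h
    have hreal : 2 * μ = -(m : ℝ) := by exact_mod_cast h
    have hm : m = 0 := by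
      have hlt : (m : ℝ) < 1 := by linarith
      exact_mod_cast Nat.lt_one_iff.mp (by exact_mod_cast hlt)
    exact hμ2 (by simpa [hm] using hreal)
  rw [← tsum_mul_left]
  exact (gegenbauer_generating_generalization_rho_general ν hν μ hμ x hx ρ hρ0 hρ1).tsum_eq.symm
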